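/- Let X be a nonempty finite index set and (ρ_x)_{x∈X} a family of positive semidefinite n×n complex matrices. Let (M_x)_{x∈X} be a POVM, i.e. each M_x is positive semidefinite and ∑_{x∈X} M_x = I. If the operator Λ := ∑_{x∈X} ρ_x M_x satisfies that Λ − ρ_x is positive semidefinite for every x ∈ X, then for every POVM (N_x)_{x∈X} (each N_x positive semidefinite with ∑_x N_x = I) one has ∑_{x∈X} tr(ρ_x N_x) ≤ ∑_{x∈X} tr(ρ_x M_x). -/

import Mathlib

open Matrix ComplexOrder

/-! The argument is weak duality for semidefinite programs: any `Λ` dominating every `ρ x` bounds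
the success probability of every POVM `N` by `tr Λ`, because `∑ x, tr ((Λ - ρ x) * N x)` is a sum of
nonnegative terms. For `Λ = ∑ y, ρ y * M y`, the bound `tr Λ` is the success probability of `M`. -/

section Duality

variable {𝕜 m X : Type*} [RCLike 𝕜] [Fintype m]

theorem trace_mul_nonneg_of_posSemidef {A B : Matrix m m 𝕜}
    (hA : A.PosSemidef) (hB : B.PosSemidef) : 0 ≤ (A * B).trace := by
  obtain ⟨k, v, rfl⟩ := posSemidef_iff_eq_sum_vecMulVec.mp hB
  have htrace : (A * ∑ i, vecMulVec (v i) (star (v i))).trace =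
      ∑ i, star (v i) ⬝ᵥ A *ᵥ v i := by
    simp only [Matrix.mul_sum, trace_sum, mul_vecMulVec, trace_vecMulVec, dotProduct_comm]
  rw [htrace]
  exact Finset.sum_nonneg fun i _ => hA.dotProduct_mulVec_nonneg (v i)

theorem trace_mul_le_trace_mul_of_posSemidef_sub {A B C : Matrix m m 𝕜}
    (hAB : (B - A).PosSemidef) (hC : C.PosSemidef) :
    (A * C).trace ≤ (B * C).trace := by
  rw [← sub_nonneg, ← trace_sub, ← Matrix.sub_mul]
  exact trace_mul_nonneg_of_posSemidef hAB hC

variable [DecidableEq m] [Fintype X]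

theorem sum_trace_mul_le_trace_of_posSemidef_sub {ρ N : X → Matrix m m 𝕜} {Λ : Matrix m m 𝕜}
    (hN : ∀ x, (N x).PosSemidef) (hNsum : ∑ x, N x = 1)
    (hΛ : ∀ x, (Λ - ρ x).PosSemidef) :
    ∑ x, (ρ x * N x).trace ≤ Λ.trace :=
  calc ∑ x, (ρ x * N x).trace
      ≤ ∑ x, (Λ * N x).trace :=
        Finset.sum_le_sum fun x _ => trace_mul_le_trace_mul_of_posSemidef_sub (hΛ x) (hN x)
    _ = (Λ * ∑ x, N x).trace := by rw [Finset.mul_sum, trace_sum]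
    _ = Λ.trace := by rw [hNsum, Matrix.mul_one]

theorem stmt0_general (ρ M N : X → Matrix m m 𝕜)
    (hN : ∀ x, (N x).PosSemidef) (hNsum : ∑ x, N x = 1)
    (hΛ : ∀ x, ((∑ y, ρ y * M y) - ρ x).PosSemidef) :
    ∑ x, (ρ x * N x).trace ≤ ∑ x, (ρ x * M x).trace := by
  rw [← trace_sum Finset.univ fun x => ρ x * M x]
  exact sum_trace_mul_le_trace_of_posSemidef_sub hN hNsum hΛ

end Duality

/-- **Holevo optimality criterion.** If a POVM `M` on states `ρ` satisfies
`Λ - ρ_x ⪰ 0` for `Λ = ∑ ρ_x M_x`, then no POVM `N` achieves a larger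
success probability `∑ tr(ρ_x N_x)`. -/
theorem stmt0 {n : ℕ} {X : Type*} [Fintype X] [Nonempty X]
    (ρ M N : X → Matrix (Fin n) (Fin n) ℂ)
    (hρ : ∀ x, (ρ x).PosSemidef)
    (hMpsd : ∀ x, (M x).PosSemidef) (hMsum : ∑ x, M x = 1)
    (hNpsd : ∀ x, (N x).PosSemidef) (hNsum : ∑ x, N x = 1)
    (hΛ : ∀ x, ((∑ y, ρ y * M y) - ρ x).PosSemidef) :
    ∑ x, ((ρ x * N x).trace).re ≤ ∑ x, ((ρ x * M x).trace).re := by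
  simpa only [Complex.re_sum] using
    (Complex.le_def.mp (stmt0_general ρ M N hNpsd hNsum hΛ)).1
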